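/- Let d, k be positive integers with 2k ≤ d, A* ∈ ℝ^{d×d}, and U₁*, U₂* ∈ ℝ^{d×k} such that the concatenated matrix [U₁* U₂*] has rank 2k. Consider the two-task Meta-LoRA loss 𝓛(A, U₁, U₂) = (1/2)·Σ_{t=1}^2 ‖A* + U_t*(U_t*)ᵀ − A − U_t(U_t)ᵀ‖_F² as a smooth function on the normed space E = ℝ^{d×d} × ℝ^{d×k} × ℝ^{d×k}. Then for any point p = (Â, Û₁, Û₂) ∈ E, 𝓛(p) = 0 if and only if p is a second-order stationary point of 𝓛, i.e., the Fréchet derivative of 𝓛 at p vanishes and the second derivative of 𝓛 at p is positive semidefinite as a quadratic form (for every direction v ∈ E, the second iterated derivative of 𝓛 at p evaluated at (v, v) is nonnegative). -/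

import Mathlib

open Matrix BigOperators

noncomputable section

attribute [local instance] Matrix.normedAddCommGroup Matrix.normedSpace

/-- Squared Frobenius norm of a real matrix. -/
def frobSq {m n : Type*} [Fintype m] [Fintype n] (M : Matrix m n ℝ) : ℝ :=
  ∑ i, ∑ j, (M i j) ^ 2

/-! At a critical point the two residuals are `R` and `-R`, where `R` is symmetric, annihilates both
adapters `U₁`, `U₂`, and satisfies `2R = (B₁B₁ᵀ - U₁U₁ᵀ) - (B₂B₂ᵀ - U₂U₂ᵀ)` for the true adapters
`B₁`, `B₂`.

Suppose `U₁x = U₂y` with `‖x‖ ≤ ‖y‖` and `y ≠ 0`. The second variation along `V₁ = zxᵀ`,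
`V₂ = (1 + e)zyᵀ`, with the shared matrix cancelling the first task's variation, is
`O(e²) + 2((1 + e)²‖y‖² - ‖x‖²) zᵀRz`, so `R` is positive semidefinite. Since `[B₁ B₂]` has full
rank, evaluating the form of `R` at a suitable vector of `ker B₁ᵀ` then forces `y = 0`.

Hence `[U₁ U₂]` has independent columns. In that case `ker [B₁ B₂]ᵀ = ker [U₁ U₂]ᵀ`; this kernel
contains the range of `R` and is annihilated by `R`, so `R² = 0` and `R = 0`. -/

section LinearAlgebra

theorem exists_linearEquiv_apply_eq_of_ker_le {K V W : Type*} [DivisionRing K] [AddCommGroup V]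
    [Module K V] [AddCommGroup W] [Module K W] [FiniteDimensional K W] {S T : V →ₗ[K] W}
    (hS : Function.Surjective S) (hTS : LinearMap.ker T ≤ LinearMap.ker S) :
    ∃ e : W ≃ₗ[K] W, ∀ v, S v = e (T v) := by
  obtain ⟨s, hs⟩ := S.exists_rightInverse_of_surjective (LinearMap.range_eq_top.2 hS)
  have hSs (w : W) : S (s w) = w := LinearMap.congr_fun hs w
  have hTs : Function.Injective (T ∘ₗ s) := by
    refine (injective_iff_map_eq_zero _).2 fun w hw => ?_
    rw [← hSs w]
    exact hTS hw
  refine ⟨(LinearEquiv.ofInjectiveEndo (T ∘ₗ s) hTs).symm, fun v => ?_⟩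
  obtain ⟨w, hw⟩ := LinearMap.injective_iff_surjective.1 hTs (T v)
  have hv : S v = w := by
    rw [← hSs w, ← sub_eq_zero, ← map_sub]
    exact hTS (by simpa [sub_eq_zero] using hw.symm)
  rw [hv, LinearEquiv.eq_symm_apply]
  exact hw

theorem real_dotProduct_self_nonneg {n : Type*} [Fintype n] (v : n → ℝ) : 0 ≤ v ⬝ᵥ v := by
  simpa using dotProduct_self_star_nonneg v

theorem mulVec_eq_zero_of_mulVec_mulVec_eq_zero {n : Type*} [Fintype n] {R : Matrix n n ℝ}
    (hR : R.IsSymm) {v : n → ℝ} (hv : R *ᵥ (R *ᵥ v) = 0) : R *ᵥ v = 0 := by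
  rwa [← conjTranspose_mul_self_mulVec_eq_zero, conjTranspose_eq_transpose_of_trivial, hR.eq,
    ← mulVec_mulVec]

variable {m n₁ n₂ K : Type*} [Field K]

theorem mulVec_transpose_surjective_of_rank_eq_card {n : Type*} [Fintype m] [Fintype n]
    {M : Matrix m n K} (hM : M.rank = Fintype.card n) : Function.Surjective Mᵀ.mulVecLin := by
  refine LinearMap.range_eq_top.1 (Submodule.eq_top_of_finrank_eq ?_)
  rw [← Matrix.rank, rank_transpose, hM, Module.finrank_fintype_fun_eq_card]

theorem rank_fromCols_of_mulVec_eq_imp_eq_zero [Fintype n₁] [Fintype n₂] {M : Matrix m n₁ K}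
    {N : Matrix m n₂ K} (h : ∀ x y, M *ᵥ x = N *ᵥ y → x = 0 ∧ y = 0) :
    (fromCols M N).rank = Fintype.card (n₁ ⊕ n₂) := by
  have hinj : Function.Injective (fromCols M N).mulVecLin := by
    refine (injective_iff_map_eq_zero _).2 fun v hv => ?_
    rw [mulVecLin_apply, fromCols_mulVec] at hv
    obtain ⟨hl, hr⟩ := h (v ∘ Sum.inl) (-(v ∘ Sum.inr)) (by
      rw [mulVec_neg, eq_neg_iff_add_eq_zero, hv])
    rw [← Sum.elim_comp_inl_inr v, hl, neg_eq_zero.1 hr, Sum.elim_zero_zero]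
  rw [Matrix.rank, LinearMap.finrank_range_of_inj hinj, Module.finrank_fintype_fun_eq_card]

theorem rank_fromCols_comm [Fintype n₁] [Fintype n₂] (M : Matrix m n₁ K) (N : Matrix m n₂ K) :
    (fromCols M N).rank = (fromCols N M).rank := by
  rw [← rank_submatrix (fromCols N M) (Equiv.refl m) (Equiv.sumComm n₁ n₂)]
  congr 1
  ext i (j | j) <;> rfl

theorem fromCols_transpose_mulVec_eq_zero_iff [Fintype m] {M : Matrix m n₁ K} {N : Matrix m n₂ K}
    {v : m → K} :
    (fromCols M N)ᵀ *ᵥ v = 0 ↔ Mᵀ *ᵥ v = 0 ∧ Nᵀ *ᵥ v = 0 := by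
  rw [transpose_fromCols, fromRows_mulVec, ← Sum.elim_zero_zero, Sum.elim_eq_iff]

end LinearAlgebra

section Frobenius

variable {m n : Type*} [Fintype m] [Fintype n]

theorem frobSq_eq_trace (M : Matrix m n ℝ) : frobSq M = (Mᵀ * M).trace := by
  simp only [frobSq, trace, diag_apply, mul_apply, transpose_apply, sq]
  exact Finset.sum_comm

theorem frobSq_nonneg (M : Matrix m n ℝ) : 0 ≤ frobSq M :=
  Finset.sum_nonneg fun _ _ => Finset.sum_nonneg fun _ _ => sq_nonneg _

theorem frobSq_eq_zero_iff {M : Matrix m n ℝ} : frobSq M = 0 ↔ M = 0 := by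
  rw [frobSq_eq_trace, ← conjTranspose_eq_transpose_of_trivial,
    trace_conjTranspose_mul_self_eq_zero_iff]

theorem frobSq_smul (c : ℝ) (M : Matrix m n ℝ) : frobSq (c • M) = c ^ 2 * frobSq M := by
  simp only [frobSq, Matrix.smul_apply, smul_eq_mul, mul_pow, Finset.mul_sum]

theorem trace_transpose_mul_comm (M N : Matrix m n ℝ) : (Mᵀ * N).trace = (Nᵀ * M).trace := by
  rw [← trace_transpose, transpose_mul, transpose_transpose]

theorem frobSq_sub_comm (M N : Matrix m n ℝ) : frobSq (M - N) = frobSq (N - M) := by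
  simp only [frobSq, Matrix.sub_apply, sub_sq_comm]

theorem frobSq_add (M N : Matrix m n ℝ) :
    frobSq (M + N) = frobSq M + 2 * (Mᵀ * N).trace + frobSq N := by
  simp only [frobSq_eq_trace, transpose_add, Matrix.add_mul, Matrix.mul_add, trace_add,
    trace_transpose_mul_comm N M]
  ring

end Frobenius

section LineDerivative

open Polynomial

variable {𝕜 E : Type*} [NontriviallyNormedField 𝕜] [NormedAddCommGroup E] [NormedSpace 𝕜 E]
  {f : E → 𝕜} {p v : E} {q : 𝕜[X]}

theorem fderiv_apply_eq_eval_derivative (hf : Differentiable 𝕜 f)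
    (hq : ∀ s : 𝕜, f (p + s • v) = q.eval s) (t : 𝕜) :
    fderiv 𝕜 f (p + t • v) v = q.derivative.eval t := by
  have hline : HasDerivAt (fun s : 𝕜 => p + s • v) v t := by
    simpa using ((hasDerivAt_id t).smul_const v).const_add p
  have hcomp : HasDerivAt (fun s => f (p + s • v)) (fderiv 𝕜 f (p + t • v) v) t :=
    (hf (p + t • v)).hasFDerivAt.comp_hasDerivAt t hline
  rw [funext hq] at hcomp
  exact hcomp.unique (q.hasDerivAt t)

theorem iteratedFDeriv_two_apply_eq_eval_derivative (hf : ContDiff 𝕜 2 f)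
    (hq : ∀ s : 𝕜, f (p + s • v) = q.eval s) (t : 𝕜) :
    iteratedFDeriv 𝕜 2 f (p + t • v) ![v, v] = q.derivative.derivative.eval t := by
  have hf' : Differentiable 𝕜 (fderiv 𝕜 f) :=
    (hf.fderiv_right (m := 1) (by norm_num)).differentiable one_ne_zero
  have hfv : Differentiable 𝕜 fun x => fderiv 𝕜 f x v := hf'.clm_apply (differentiable_const v)
  rw [← fderiv_apply_eq_eval_derivative hfv
    (fderiv_apply_eq_eval_derivative (hf.differentiable two_ne_zero) hq) t,
    iteratedFDeriv_two_apply, fderiv_clm_apply (hf' _) (differentiableAt_const v)]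
  simp

end LineDerivative

/-- Second-order stationarity of `f` at `p`: the gradient vanishes and the Hessian quadratic form
is nonnegative. -/
def IsSecondOrderStationary {E : Type*} [NormedAddCommGroup E] [NormedSpace ℝ E] (f : E → ℝ)
    (p : E) : Prop :=
  fderiv ℝ f p = 0 ∧ ∀ v, 0 ≤ iteratedFDeriv ℝ 2 f p ![v, v]

/-- The derivative of `U ↦ U * Uᵀ` at `U` in the direction `V`. -/
def gramVariation {m n : Type*} [Fintype n] (U V : Matrix m n ℝ) : Matrix m m ℝ :=
  V * Uᵀ + U * Vᵀ

/-- The residual of one task with true parameters `Astar + Us * Usᵀ`, fitted by the shared matrix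
`A` and the adapter `U`. -/
def loraResidual {m n : Type*} [Fintype n] (Astar : Matrix m m ℝ) (Us : Matrix m n ℝ)
    (A : Matrix m m ℝ) (U : Matrix m n ℝ) : Matrix m m ℝ :=
  Astar + Us * Usᵀ - A - U * Uᵀ

/-- The two-task Meta-LoRA loss at `(A, U₁, U₂)`, for tasks with adapters of possibly different
ranks. -/
def metaLoRALoss {m n₁ n₂ : Type*} [Fintype m] [Fintype n₁] [Fintype n₂] (Astar : Matrix m m ℝ)
    (U₁s : Matrix m n₁ ℝ) (U₂s : Matrix m n₂ ℝ)
    (p : Matrix m m ℝ × Matrix m n₁ ℝ × Matrix m n₂ ℝ) : ℝ :=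
  (1 / 2) * (frobSq (loraResidual Astar U₁s p.1 p.2.1) + frobSq (loraResidual Astar U₂s p.1 p.2.2))

section Variation

variable {m n : Type*} [Fintype n]

@[simp]
theorem gramVariation_zero (U : Matrix m n ℝ) : gramVariation U 0 = 0 := by
  simp [gramVariation]

theorem gramVariation_smul (U V : Matrix m n ℝ) (c : ℝ) :
    gramVariation U (c • V) = c • gramVariation U V := by
  simp only [gramVariation, transpose_smul, Matrix.smul_mul, Matrix.mul_smul, smul_add]

theorem gramVariation_vecMulVec (U : Matrix m n ℝ) (z : m → ℝ) (x : n → ℝ) :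
    gramVariation U (vecMulVec z x) = vecMulVec z (U *ᵥ x) + vecMulVec (U *ᵥ x) z := by
  rw [gramVariation, vecMulVec_mul, vecMul_transpose, transpose_vecMulVec, mul_vecMulVec]

theorem loraResidual_add_smul (Astar A H : Matrix m m ℝ) (Us U V : Matrix m n ℝ) (s : ℝ) :
    loraResidual Astar Us (A + s • H) (U + s • V) =
      loraResidual Astar Us A U + (-s) • (H + gramVariation U V + s • (V * Vᵀ)) := by
  simp only [loraResidual, gramVariation, transpose_add, transpose_smul, Matrix.add_mul,
    Matrix.mul_add, Matrix.smul_mul, Matrix.mul_smul]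
  module

variable [Fintype m]

theorem trace_mul_gram_vecMulVec (R : Matrix m m ℝ) (z : m → ℝ) (x : n → ℝ) :
    (R * (vecMulVec z x * (vecMulVec z x)ᵀ)).trace = (x ⬝ᵥ x) * (z ⬝ᵥ R *ᵥ z) := by
  rw [transpose_vecMulVec, vecMulVec_mul_vecMulVec, mul_vecMulVec, trace_vecMulVec,
    dotProduct_comm (R *ᵥ z)]
  simp

theorem mul_eq_zero_of_trace_mul_gramVariation_eq_zero {R : Matrix m m ℝ} (hR : R.IsSymm)
    {U : Matrix m n ℝ} (h : (R * gramVariation U (R * U)).trace = 0) : R * U = 0 := by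
  have hleft : (R * (R * U * Uᵀ)).trace = frobSq (R * U) := by
    rw [frobSq_eq_trace, ← Matrix.mul_assoc, trace_mul_comm, transpose_mul, hR.eq, Matrix.mul_assoc]
  have hright : (R * (U * (R * U)ᵀ)).trace = frobSq (R * U) := by
    rw [frobSq_eq_trace, ← Matrix.mul_assoc, trace_mul_comm]
  rw [gramVariation, Matrix.mul_add, trace_add, hleft, hright] at h
  exact frobSq_eq_zero_iff.1 (by linarith)

end Variation

section Derivatives

open Polynomial

variable {m n₁ n₂ : Type*} [Fintype m] [Fintype n₁] [Fintype n₂]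

/-- The polynomial `s ↦ ‖R - s S - s² Q‖²`, the loss of one task along a line: `R` is the residual,
`S` its first variation and `Q` its second. -/
def frobSqPoly (R S Q : Matrix m m ℝ) : ℝ[X] :=
  C (frobSq R) - C (2 * (Rᵀ * S).trace) * X + C (frobSq S - 2 * (Rᵀ * Q).trace) * X ^ 2 +
    C (2 * (Sᵀ * Q).trace) * X ^ 3 + C (frobSq Q) * X ^ 4

theorem eval_frobSqPoly (R S Q : Matrix m m ℝ) (s : ℝ) :
    (frobSqPoly R S Q).eval s = frobSq (R + (-s) • (S + s • Q)) := by
  simp only [frobSq_add, frobSq_smul, Matrix.mul_add, Matrix.mul_smul, trace_add, trace_smul,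
    smul_eq_mul, frobSqPoly, eval_add, eval_sub, eval_mul, eval_C, eval_X, eval_pow]
  ring

theorem eval_zero_derivative_frobSqPoly (R S Q : Matrix m m ℝ) :
    (frobSqPoly R S Q).derivative.eval 0 = -2 * (Rᵀ * S).trace := by
  simp [frobSqPoly]

theorem eval_zero_derivative_derivative_frobSqPoly (R S Q : Matrix m m ℝ) :
    (frobSqPoly R S Q).derivative.derivative.eval 0 = 2 * (frobSq S - 2 * (Rᵀ * Q).trace) := by
  simp [frobSqPoly, one_add_one_eq_two, mul_comm (2 : ℝ) (_ - _)]

theorem contDiff_matrix_entry {E m n : Type*} [NormedAddCommGroup E] [NormedSpace ℝ E] [Fintype m]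
    [Fintype n] {k : WithTop ℕ∞} {f : E → Matrix m n ℝ} (hf : ContDiff ℝ k f) (i : m) (j : n) :
    ContDiff ℝ k fun x => f x i j :=
  (contDiff_apply_apply ℝ ℝ i j).comp hf

variable (Astar : Matrix m m ℝ) (U₁s : Matrix m n₁ ℝ) (U₂s : Matrix m n₂ ℝ)

theorem contDiff_metaLoRALoss {k : WithTop ℕ∞} :
    ContDiff ℝ k (metaLoRALoss Astar U₁s U₂s) := by
  unfold metaLoRALoss loraResidual frobSq
  simp only [Matrix.sub_apply, Matrix.mul_apply, Matrix.transpose_apply]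
  have := contDiff_matrix_entry (k := k)
    (contDiff_fst (𝕜 := ℝ) (E := Matrix m m ℝ) (F := Matrix m n₁ ℝ × Matrix m n₂ ℝ))
  have := contDiff_matrix_entry (k := k) (contDiff_fst.comp
    (contDiff_snd (𝕜 := ℝ) (E := Matrix m m ℝ) (F := Matrix m n₁ ℝ × Matrix m n₂ ℝ)))
  have := contDiff_matrix_entry (k := k) (contDiff_snd.comp
    (contDiff_snd (𝕜 := ℝ) (E := Matrix m m ℝ) (F := Matrix m n₁ ℝ × Matrix m n₂ ℝ)))
  fun_prop

variable (A H : Matrix m m ℝ) (U₁ V₁ : Matrix m n₁ ℝ) (U₂ V₂ : Matrix m n₂ ℝ)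

theorem metaLoRALoss_add_smul (s : ℝ) :
    metaLoRALoss Astar U₁s U₂s ((A, U₁, U₂) + s • (H, V₁, V₂)) =
      (C (1 / 2) *
        (frobSqPoly (loraResidual Astar U₁s A U₁) (H + gramVariation U₁ V₁) (V₁ * V₁ᵀ) +
          frobSqPoly (loraResidual Astar U₂s A U₂) (H + gramVariation U₂ V₂) (V₂ * V₂ᵀ))).eval
        s := by
  simp only [metaLoRALoss, Prod.smul_mk, Prod.mk_add_mk, loraResidual_add_smul, eval_mul, eval_add,
    eval_C, eval_frobSqPoly]

theorem fderiv_metaLoRALoss_apply :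
    fderiv ℝ (metaLoRALoss Astar U₁s U₂s) (A, U₁, U₂) (H, V₁, V₂) =
      -(((loraResidual Astar U₁s A U₁)ᵀ * (H + gramVariation U₁ V₁)).trace +
        ((loraResidual Astar U₂s A U₂)ᵀ * (H + gramVariation U₂ V₂)).trace) := by
  have h := fderiv_apply_eq_eval_derivative
    ((contDiff_metaLoRALoss Astar U₁s U₂s).differentiable one_ne_zero)
    (metaLoRALoss_add_smul Astar U₁s U₂s A H U₁ V₁ U₂ V₂) 0
  rw [zero_smul, add_zero, derivative_C_mul, derivative_add, eval_mul, eval_C, eval_add,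
    eval_zero_derivative_frobSqPoly, eval_zero_derivative_frobSqPoly] at h
  exact h.trans (by ring)

theorem iteratedFDeriv_two_metaLoRALoss_apply :
    iteratedFDeriv ℝ 2 (metaLoRALoss Astar U₁s U₂s) (A, U₁, U₂) ![(H, V₁, V₂), (H, V₁, V₂)] =
      frobSq (H + gramVariation U₁ V₁) + frobSq (H + gramVariation U₂ V₂) -
        2 * (((loraResidual Astar U₁s A U₁)ᵀ * (V₁ * V₁ᵀ)).trace +
          ((loraResidual Astar U₂s A U₂)ᵀ * (V₂ * V₂ᵀ)).trace) := by
  have h := iteratedFDeriv_two_apply_eq_eval_derivative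
    (contDiff_metaLoRALoss Astar U₁s U₂s)
    (metaLoRALoss_add_smul Astar U₁s U₂s A H U₁ V₁ U₂ V₂) 0
  rw [zero_smul, add_zero, derivative_C_mul, derivative_C_mul, derivative_add, derivative_add,
    eval_mul, eval_C, eval_add, eval_zero_derivative_derivative_frobSqPoly,
    eval_zero_derivative_derivative_frobSqPoly] at h
  exact h.trans (by ring)

end Derivatives

section ResidualAlgebra

variable {m n₁ n₂ : Type*} [Fintype n₁] [Fintype n₂] {R : Matrix m m ℝ}
  {B₁ U₁ : Matrix m n₁ ℝ} {B₂ U₂ : Matrix m n₂ ℝ}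

theorem residual_isSymm
    (hR : (2 : ℝ) • R = B₁ * B₁ᵀ - U₁ * U₁ᵀ - (B₂ * B₂ᵀ - U₂ * U₂ᵀ)) : R.IsSymm := by
  refine smul_right_injective _ (two_ne_zero (α := ℝ)) ?_
  simp only [← transpose_smul, hR, transpose_sub, transpose_mul, transpose_transpose]

variable [Fintype m]

theorem two_smul_residual_mulVec
    (hR : (2 : ℝ) • R = B₁ * B₁ᵀ - U₁ * U₁ᵀ - (B₂ * B₂ᵀ - U₂ * U₂ᵀ)) (v : m → ℝ) :
    (2 : ℝ) • (R *ᵥ v) =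
      B₁ *ᵥ (B₁ᵀ *ᵥ v) - U₁ *ᵥ (U₁ᵀ *ᵥ v) - (B₂ *ᵥ (B₂ᵀ *ᵥ v) - U₂ *ᵥ (U₂ᵀ *ᵥ v)) := by
  simp only [← smul_mulVec, hR, sub_mulVec, mulVec_mulVec]

theorem two_mul_residual_quadForm
    (hR : (2 : ℝ) • R = B₁ * B₁ᵀ - U₁ * U₁ᵀ - (B₂ * B₂ᵀ - U₂ * U₂ᵀ)) (v : m → ℝ) :
    2 * (v ⬝ᵥ R *ᵥ v) =
      (B₁ᵀ *ᵥ v) ⬝ᵥ (B₁ᵀ *ᵥ v) - (U₁ᵀ *ᵥ v) ⬝ᵥ (U₁ᵀ *ᵥ v) -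
        ((B₂ᵀ *ᵥ v) ⬝ᵥ (B₂ᵀ *ᵥ v) - (U₂ᵀ *ᵥ v) ⬝ᵥ (U₂ᵀ *ᵥ v)) := by
  rw [← smul_eq_mul, ← dotProduct_smul, two_smul_residual_mulVec hR]
  simp only [dotProduct_sub, dotProduct_mulVec v, ← mulVec_transpose]

theorem transpose_mulVec_eq_zero_of_residual
    (hR : (2 : ℝ) • R = B₁ * B₁ᵀ - U₁ * U₁ᵀ - (B₂ * B₂ᵀ - U₂ * U₂ᵀ))
    (hRU₁ : R * U₁ = 0) (hRU₂ : R * U₂ = 0)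
    (hindep : ∀ x y, U₁ *ᵥ x = U₂ *ᵥ y → x = 0 ∧ y = 0)
    {v : m → ℝ} (hv₁ : B₁ᵀ *ᵥ v = 0) (hv₂ : B₂ᵀ *ᵥ v = 0) : U₁ᵀ *ᵥ v = 0 ∧ U₂ᵀ *ᵥ v = 0 := by
  have hRv : (2 : ℝ) • (R *ᵥ v) = U₂ *ᵥ (U₂ᵀ *ᵥ v) - U₁ *ᵥ (U₁ᵀ *ᵥ v) := by
    rw [two_smul_residual_mulVec hR, hv₁, hv₂, mulVec_zero, mulVec_zero]
    abel
  have hRRv : (2 : ℝ) • (R *ᵥ (R *ᵥ v)) = 0 := by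
    rw [← mulVec_smul, hRv, mulVec_sub, mulVec_mulVec _ R, mulVec_mulVec _ R, hRU₁, hRU₂,
      zero_mulVec, zero_mulVec, sub_zero]
  rw [mulVec_eq_zero_of_mulVec_mulVec_eq_zero (residual_isSymm hR)
    ((smul_eq_zero.1 hRRv).resolve_left two_ne_zero), smul_zero] at hRv
  exact hindep _ _ (sub_eq_zero.1 hRv.symm).symm

theorem residual_eq_zero_of_mulVec_eq_imp_eq_zero
    (hR : (2 : ℝ) • R = B₁ * B₁ᵀ - U₁ * U₁ᵀ - (B₂ * B₂ᵀ - U₂ * U₂ᵀ))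
    (hRU₁ : R * U₁ = 0) (hRU₂ : R * U₂ = 0)
    (hindep : ∀ x y, U₁ *ᵥ x = U₂ *ᵥ y → x = 0 ∧ y = 0) : R = 0 := by
  have hsymm := residual_isSymm hR
  have hUR₁ (v : m → ℝ) : U₁ᵀ *ᵥ (R *ᵥ v) = 0 := by
    rw [mulVec_mulVec, ← hsymm.eq, ← transpose_mul, hRU₁, transpose_zero, zero_mulVec]
  have hUR₂ (v : m → ℝ) : U₂ᵀ *ᵥ (R *ᵥ v) = 0 := by
    rw [mulVec_mulVec, ← hsymm.eq, ← transpose_mul, hRU₂, transpose_zero, zero_mulVec]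
  have hker : LinearMap.ker (fromCols B₁ B₂)ᵀ.mulVecLin ≤
      LinearMap.ker (fromCols U₁ U₂)ᵀ.mulVecLin := fun v hv => by
    obtain ⟨hv₁, hv₂⟩ := fromCols_transpose_mulVec_eq_zero_iff.1 hv
    exact fromCols_transpose_mulVec_eq_zero_iff.2
      (transpose_mulVec_eq_zero_of_residual hR hRU₁ hRU₂ hindep hv₁ hv₂)
  obtain ⟨e, he⟩ := exists_linearEquiv_apply_eq_of_ker_le
    (mulVec_transpose_surjective_of_rank_eq_card
      (rank_fromCols_of_mulVec_eq_imp_eq_zero hindep)) hker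
  have hRR (v : m → ℝ) : R *ᵥ (R *ᵥ v) = 0 := by
    have hB : (fromCols B₁ B₂)ᵀ *ᵥ (R *ᵥ v) = 0 := by
      refine e.map_eq_zero_iff.1 ((he _).symm.trans ?_)
      exact fromCols_transpose_mulVec_eq_zero_iff.2 ⟨hUR₁ v, hUR₂ v⟩
    obtain ⟨hB₁, hB₂⟩ := fromCols_transpose_mulVec_eq_zero_iff.1 hB
    refine (smul_eq_zero.1 (two_smul_residual_mulVec hR (R *ᵥ v) |>.trans ?_)).resolve_left
      two_ne_zero
    simp only [hB₁, hB₂, hUR₁, hUR₂, mulVec_zero, sub_zero]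
  exact mulVec_injective (funext fun v =>
    (mulVec_eq_zero_of_mulVec_mulVec_eq_zero hsymm (hRR v)).trans (zero_mulVec v).symm)

theorem nonneg_of_forall_mul_le_sq_mul {F a b q : ℝ} (hab : a ≤ b) (hb : 0 < b)
    (h : ∀ e : ℝ, 2 * (a - (1 + e) ^ 2 * b) * q ≤ e ^ 2 * F) : 0 ≤ q := by
  by_contra! hq
  have hquad (e : ℝ) : 0 ≤ (F + 2 * b * q) * (e * e) + 4 * b * q * e + 0 := by
    nlinarith [h e, mul_nonneg (sub_nonneg.2 hab) (neg_nonneg.2 hq.le)]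
  have hdiscrim := discrim_le_zero hquad
  have hpos : 0 < (4 * b * q) ^ 2 := by
    have hq0 := hq.ne
    positivity
  rw [discrim] at hdiscrim
  linarith

theorem residual_quadForm_nonneg
    (hcurv : ∀ V₁ V₂, 2 * ((R * (V₁ * V₁ᵀ)).trace - (R * (V₂ * V₂ᵀ)).trace) ≤
      frobSq (gramVariation U₂ V₂ - gramVariation U₁ V₁))
    {x : n₁ → ℝ} {y : n₂ → ℝ} (hxy : U₁ *ᵥ x = U₂ *ᵥ y) (hle : x ⬝ᵥ x ≤ y ⬝ᵥ y) (hy : y ≠ 0)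
    (z : m → ℝ) : 0 ≤ z ⬝ᵥ R *ᵥ z := by
  have hyy : 0 < y ⬝ᵥ y :=
    (real_dotProduct_self_nonneg y).lt_of_ne' (dotProduct_self_eq_zero.not.2 hy)
  refine nonneg_of_forall_mul_le_sq_mul (F := frobSq (gramVariation U₁ (vecMulVec z x))) hle hyy
    fun e => ?_
  have hvar : gramVariation U₂ ((1 + e) • vecMulVec z y) - gramVariation U₁ (vecMulVec z x) =
      e • gramVariation U₁ (vecMulVec z x) := by
    rw [gramVariation_smul, gramVariation_vecMulVec, gramVariation_vecMulVec, hxy]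
    module
  have h := hcurv (vecMulVec z x) ((1 + e) • vecMulVec z y)
  rw [hvar, frobSq_smul, transpose_smul, Matrix.smul_mul, Matrix.mul_smul, Matrix.mul_smul,
    Matrix.mul_smul, trace_smul, trace_smul, trace_mul_gram_vecMulVec, trace_mul_gram_vecMulVec,
    smul_eq_mul, smul_eq_mul] at h
  linarith

theorem eq_zero_of_residual_quadForm_nonneg
    (hB : (fromCols B₁ B₂).rank = Fintype.card (n₁ ⊕ n₂))
    (hR : (2 : ℝ) • R = B₁ * B₁ᵀ - U₁ * U₁ᵀ - (B₂ * B₂ᵀ - U₂ * U₂ᵀ))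
    (hpos : ∀ z, 0 ≤ z ⬝ᵥ R *ᵥ z)
    {x : n₁ → ℝ} {y : n₂ → ℝ} (hxy : U₁ *ᵥ x = U₂ *ᵥ y) (hle : x ⬝ᵥ x ≤ y ⬝ᵥ y) : y = 0 := by
  have hsurj := mulVec_transpose_surjective_of_rank_eq_card hB
  have hker : LinearMap.ker (fromCols B₁ U₂)ᵀ.mulVecLin ≤
      LinearMap.ker (fromCols B₁ B₂)ᵀ.mulVecLin := by
    intro v hv
    rw [LinearMap.mem_ker, mulVecLin_apply, fromCols_transpose_mulVec_eq_zero_iff] at hv ⊢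
    have hquad := two_mul_residual_quadForm hR v
    rw [hv.1, hv.2, dotProduct_zero, dotProduct_zero] at hquad
    refine ⟨hv.1, dotProduct_self_eq_zero.1 (le_antisymm ?_ (real_dotProduct_self_nonneg _))⟩
    linarith [hpos v, real_dotProduct_self_nonneg (U₁ᵀ *ᵥ v)]
  obtain ⟨e, he⟩ := exists_linearEquiv_apply_eq_of_ker_le hsurj hker
  obtain ⟨v, hv⟩ := hsurj (e (Sum.elim 0 y))
  obtain ⟨hB₁v, hU₂v⟩ : B₁ᵀ *ᵥ v = 0 ∧ U₂ᵀ *ᵥ v = y := by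
    have hv' := e.injective ((he v).symm.trans hv)
    rwa [mulVecLin_apply, transpose_fromCols, fromRows_mulVec, Sum.elim_eq_iff] at hv'
  have hinner : (U₁ᵀ *ᵥ v) ⬝ᵥ x = y ⬝ᵥ y := by
    nth_rw 1 [← hU₂v]
    simp only [mulVec_transpose, ← dotProduct_mulVec, hxy]
  have hquad := two_mul_residual_quadForm hR v
  rw [hB₁v, hU₂v, dotProduct_zero] at hquad
  -- `‖U₁ᵀv‖² ≥ 2⟪U₁ᵀv, x⟫ - ‖x‖² ≥ ‖y‖² = ‖U₂ᵀv‖²`, so `vᵀRv ≥ 0` forces `B₂ᵀv = 0`.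
  have hdist := real_dotProduct_self_nonneg (U₁ᵀ *ᵥ v - x)
  simp only [sub_dotProduct, dotProduct_sub, dotProduct_comm x] at hdist
  have hB₂v : B₂ᵀ *ᵥ v = 0 := by
    refine dotProduct_self_eq_zero.1 (le_antisymm ?_ (real_dotProduct_self_nonneg _))
    linarith [hpos v]
  have hev : e (Sum.elim 0 y) = 0 :=
    hv.symm.trans (fromCols_transpose_mulVec_eq_zero_iff.2 ⟨hB₁v, hB₂v⟩)
  rw [e.map_eq_zero_iff, ← Sum.elim_zero_zero, Sum.elim_eq_iff] at hev
  exact hev.2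

theorem eq_zero_of_mulVec_eq_of_le
    (hB : (fromCols B₁ B₂).rank = Fintype.card (n₁ ⊕ n₂))
    (hR : (2 : ℝ) • R = B₁ * B₁ᵀ - U₁ * U₁ᵀ - (B₂ * B₂ᵀ - U₂ * U₂ᵀ))
    (hcurv : ∀ V₁ V₂, 2 * ((R * (V₁ * V₁ᵀ)).trace - (R * (V₂ * V₂ᵀ)).trace) ≤
      frobSq (gramVariation U₂ V₂ - gramVariation U₁ V₁))
    {x : n₁ → ℝ} {y : n₂ → ℝ} (hxy : U₁ *ᵥ x = U₂ *ᵥ y) (hle : x ⬝ᵥ x ≤ y ⬝ᵥ y) :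
    x = 0 ∧ y = 0 := by
  have hy : y = 0 := by
    by_contra hy
    exact hy (eq_zero_of_residual_quadForm_nonneg hB hR
      (residual_quadForm_nonneg hcurv hxy hle hy) hxy hle)
  rw [hy, dotProduct_zero] at hle
  exact ⟨dotProduct_self_eq_zero.1 (hle.antisymm (real_dotProduct_self_nonneg x)), hy⟩

theorem eq_zero_of_mulVec_eq
    (hB : (fromCols B₁ B₂).rank = Fintype.card (n₁ ⊕ n₂))
    (hR : (2 : ℝ) • R = B₁ * B₁ᵀ - U₁ * U₁ᵀ - (B₂ * B₂ᵀ - U₂ * U₂ᵀ))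
    (hcurv : ∀ V₁ V₂, 2 * ((R * (V₁ * V₁ᵀ)).trace - (R * (V₂ * V₂ᵀ)).trace) ≤
      frobSq (gramVariation U₂ V₂ - gramVariation U₁ V₁))
    {x : n₁ → ℝ} {y : n₂ → ℝ} (hxy : U₁ *ᵥ x = U₂ *ᵥ y) : x = 0 ∧ y = 0 := by
  rcases le_total (x ⬝ᵥ x) (y ⬝ᵥ y) with hle | hle
  · exact eq_zero_of_mulVec_eq_of_le hB hR hcurv hxy hle
  · refine (eq_zero_of_mulVec_eq_of_le (R := -R) (B₁ := B₂) (B₂ := B₁) ?_ ?_ ?_ hxy.symm hle).symm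
    · rw [rank_fromCols_comm, hB, Fintype.card_sum, Fintype.card_sum, add_comm]
    · rw [smul_neg, hR, neg_sub]
    · intro V₂ V₁
      rw [frobSq_sub_comm]
      simp only [Matrix.neg_mul, trace_neg]
      linarith [hcurv V₁ V₂]

end ResidualAlgebra

section SecondOrderStationary

variable {m n₁ n₂ : Type*} [Fintype m] [Fintype n₁] [Fintype n₂] {Astar A : Matrix m m ℝ}
  {U₁s U₁ : Matrix m n₁ ℝ} {U₂s U₂ : Matrix m n₂ ℝ}

theorem metaLoRALoss_eq_zero_iff :
    metaLoRALoss Astar U₁s U₂s (A, U₁, U₂) = 0 ↔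
      loraResidual Astar U₁s A U₁ = 0 ∧ loraResidual Astar U₂s A U₂ = 0 := by
  rw [metaLoRALoss, mul_eq_zero_iff_left (by norm_num),
    add_eq_zero_iff_of_nonneg (frobSq_nonneg _) (frobSq_nonneg _), frobSq_eq_zero_iff,
    frobSq_eq_zero_iff]

theorem isSecondOrderStationary_of_metaLoRALoss_eq_zero
    (h : metaLoRALoss Astar U₁s U₂s (A, U₁, U₂) = 0) :
    IsSecondOrderStationary (metaLoRALoss Astar U₁s U₂s) (A, U₁, U₂) := by
  obtain ⟨hR₁, hR₂⟩ := metaLoRALoss_eq_zero_iff.1 h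
  refine ⟨ContinuousLinearMap.ext fun ⟨H, V₁, V₂⟩ => ?_, fun ⟨H, V₁, V₂⟩ => ?_⟩
  · refine (fderiv_metaLoRALoss_apply ..).trans ?_
    simp [hR₁, hR₂]
  · refine le_of_le_of_eq ?_ (iteratedFDeriv_two_metaLoRALoss_apply ..).symm
    simpa [hR₁, hR₂] using add_nonneg (frobSq_nonneg _) (frobSq_nonneg _)

theorem trace_loraResidual_add_eq_zero
    (h : fderiv ℝ (metaLoRALoss Astar U₁s U₂s) (A, U₁, U₂) = 0)
    (H : Matrix m m ℝ) (V₁ : Matrix m n₁ ℝ) (V₂ : Matrix m n₂ ℝ) :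
    ((loraResidual Astar U₁s A U₁)ᵀ * (H + gramVariation U₁ V₁)).trace +
      ((loraResidual Astar U₂s A U₂)ᵀ * (H + gramVariation U₂ V₂)).trace = 0 := by
  have hv : fderiv ℝ (metaLoRALoss Astar U₁s U₂s) (A, U₁, U₂) (H, V₁, V₂) = 0 := by
    rw [h, _root_.zero_apply]
  exact neg_eq_zero.1 ((fderiv_metaLoRALoss_apply ..).symm.trans hv)

theorem loraResidual_eq_neg_of_fderiv_eq_zero
    (h : fderiv ℝ (metaLoRALoss Astar U₁s U₂s) (A, U₁, U₂) = 0) :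
    loraResidual Astar U₂s A U₂ = -loraResidual Astar U₁s A U₁ := by
  have htr := trace_loraResidual_add_eq_zero h
    (loraResidual Astar U₁s A U₁ + loraResidual Astar U₂s A U₂) 0 0
  rw [gramVariation_zero, gramVariation_zero, add_zero, ← trace_add, ← Matrix.add_mul,
    ← transpose_add, ← frobSq_eq_trace, frobSq_eq_zero_iff] at htr
  exact eq_neg_of_add_eq_zero_right htr

theorem two_smul_loraResidual_of_fderiv_eq_zero
    (h : fderiv ℝ (metaLoRALoss Astar U₁s U₂s) (A, U₁, U₂) = 0) :
    (2 : ℝ) • loraResidual Astar U₁s A U₁ =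
      U₁s * U₁sᵀ - U₁ * U₁ᵀ - (U₂s * U₂sᵀ - U₂ * U₂ᵀ) := by
  have hneg := eq_neg_iff_add_eq_zero.1 (loraResidual_eq_neg_of_fderiv_eq_zero h)
  calc (2 : ℝ) • loraResidual Astar U₁s A U₁
      = loraResidual Astar U₁s A U₁ - loraResidual Astar U₂s A U₂ +
          (loraResidual Astar U₂s A U₂ + loraResidual Astar U₁s A U₁) := by module
    _ = U₁s * U₁sᵀ - U₁ * U₁ᵀ - (U₂s * U₂sᵀ - U₂ * U₂ᵀ) := by
      rw [hneg, loraResidual, loraResidual]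
      abel

theorem loraResidual_mul_eq_zero_of_fderiv_eq_zero
    (h : fderiv ℝ (metaLoRALoss Astar U₁s U₂s) (A, U₁, U₂) = 0) :
    loraResidual Astar U₁s A U₁ * U₁ = 0 ∧ loraResidual Astar U₁s A U₁ * U₂ = 0 := by
  have hsymm := residual_isSymm (two_smul_loraResidual_of_fderiv_eq_zero h)
  have htr := trace_loraResidual_add_eq_zero h 0
  simp only [loraResidual_eq_neg_of_fderiv_eq_zero h, transpose_neg, hsymm.eq, zero_add,
    Matrix.neg_mul, trace_neg] at htr
  constructor <;> refine mul_eq_zero_of_trace_mul_gramVariation_eq_zero hsymm ?_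
  · simpa using htr (loraResidual Astar U₁s A U₁ * U₁) 0
  · simpa using htr 0 (loraResidual Astar U₁s A U₁ * U₂)

theorem two_mul_trace_sub_le_frobSq_of_isSecondOrderStationary
    (h : IsSecondOrderStationary (metaLoRALoss Astar U₁s U₂s) (A, U₁, U₂))
    (V₁ : Matrix m n₁ ℝ) (V₂ : Matrix m n₂ ℝ) :
    2 * ((loraResidual Astar U₁s A U₁ * (V₁ * V₁ᵀ)).trace -
        (loraResidual Astar U₁s A U₁ * (V₂ * V₂ᵀ)).trace) ≤
      frobSq (gramVariation U₂ V₂ - gramVariation U₁ V₁) := by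
  have hsymm := residual_isSymm (two_smul_loraResidual_of_fderiv_eq_zero h.1)
  have hess := (h.2 (-gramVariation U₁ V₁, V₁, V₂)).trans_eq
    (iteratedFDeriv_two_metaLoRALoss_apply ..)
  rw [neg_add_cancel, frobSq_eq_zero_iff.2 rfl, neg_add_eq_sub,
    loraResidual_eq_neg_of_fderiv_eq_zero h.1, transpose_neg, hsymm.eq, Matrix.neg_mul,
    trace_neg] at hess
  linarith

theorem metaLoRALoss_eq_zero_of_isSecondOrderStationary
    (hdiv : (fromCols U₁s U₂s).rank = Fintype.card (n₁ ⊕ n₂))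
    (h : IsSecondOrderStationary (metaLoRALoss Astar U₁s U₂s) (A, U₁, U₂)) :
    metaLoRALoss Astar U₁s U₂s (A, U₁, U₂) = 0 := by
  have hR := two_smul_loraResidual_of_fderiv_eq_zero h.1
  obtain ⟨hRU₁, hRU₂⟩ := loraResidual_mul_eq_zero_of_fderiv_eq_zero h.1
  have hR₁ : loraResidual Astar U₁s A U₁ = 0 :=
    residual_eq_zero_of_mulVec_eq_imp_eq_zero hR hRU₁ hRU₂ fun _ _ =>
      eq_zero_of_mulVec_eq hdiv hR (two_mul_trace_sub_le_frobSq_of_isSecondOrderStationary h)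
  have hR₂ : loraResidual Astar U₂s A U₂ = 0 := by
    rw [loraResidual_eq_neg_of_fderiv_eq_zero h.1, hR₁, neg_zero]
  exact metaLoRALoss_eq_zero_iff.2 ⟨hR₁, hR₂⟩

end SecondOrderStationary

theorem metaLoRA_two_task_SOSP_iff_global_min_general {m n₁ n₂ : Type*} [Fintype m] [Fintype n₁]
    [Fintype n₂] (Astar : Matrix m m ℝ) (U₁s : Matrix m n₁ ℝ) (U₂s : Matrix m n₂ ℝ)
    (hdiv : (fromCols U₁s U₂s).rank = Fintype.card (n₁ ⊕ n₂))
    (p : Matrix m m ℝ × Matrix m n₁ ℝ × Matrix m n₂ ℝ) :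
    metaLoRALoss Astar U₁s U₂s p = 0 ↔
      IsSecondOrderStationary (metaLoRALoss Astar U₁s U₂s) p :=
  ⟨isSecondOrderStationary_of_metaLoRALoss_eq_zero,
    metaLoRALoss_eq_zero_of_isSecondOrderStationary hdiv⟩

/-- Theorem 4 (strict saddle property, `T = 2`): a point has zero two-task Meta-LoRA
loss iff it is a second-order stationary point (vanishing Fréchet derivative and
positive semidefinite second derivative). -/
theorem metaLoRA_two_task_SOSP_iff_global_min
    (d k : ℕ) (hd : 0 < d) (hk : 0 < k) (hkd : 2 * k ≤ d)
    (Astar : Matrix (Fin d) (Fin d) ℝ)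
    (U₁s U₂s : Matrix (Fin d) (Fin k) ℝ)
    (hdiv : (Matrix.fromCols U₁s U₂s).rank = 2 * k)
    (L : Matrix (Fin d) (Fin d) ℝ × Matrix (Fin d) (Fin k) ℝ × Matrix (Fin d) (Fin k) ℝ → ℝ)
    (hL : ∀ p, L p = (1 / 2) *
      (frobSq (Astar + U₁s * U₁sᵀ - p.1 - p.2.1 * p.2.1ᵀ) +
       frobSq (Astar + U₂s * U₂sᵀ - p.1 - p.2.2 * p.2.2ᵀ))) :
    ∀ p, L p = 0 ↔
      (fderiv ℝ L p = 0 ∧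
        ∀ v : Matrix (Fin d) (Fin d) ℝ × Matrix (Fin d) (Fin k) ℝ ×
            Matrix (Fin d) (Fin k) ℝ,
          0 ≤ iteratedFDeriv ℝ 2 L p ![v, v]) := by
  intro p
  obtain rfl : L = metaLoRALoss Astar U₁s U₂s := funext hL
  exact metaLoRA_two_task_SOSP_iff_global_min_general Astar U₁s U₂s
    (by simpa [two_mul] using hdiv) p
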